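/- Let u ∈ E be differentially transcendental over F. Let P₁, Q₁ ∈ F{u} be nonzero coprime with m₁ := max(ord P₁, ord Q₁) ≥ 0, and set v := P₁(u)/Q₁(u). Then v is differentially transcendental over F, and for any nonzero coprime P₂, Q₂ ∈ F{u} with m₂ := max(ord P₂, ord Q₂) ≥ 0 one has Q₂(v) ≠ 0 and the transcendence degree of F⟨{u}⟩ over F⟨{P₂(v)/Q₂(v)}⟩ equals m₁ + m₂ (i.e., the order of the composed differential rational function R₂(R₁(u)) is ord(R₁) + ord(R₂)). -/

import Mathlib

/-!
Write `v = P₁(u)/Q₁(u)` and `w = P₂(v)/Q₂(v)`. The first `m₁` derivatives of `u` together with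
the first `m₂` derivatives of `v` form a transcendence basis of `F⟨u⟩` over `F⟨w⟩`.

Let `v = P(u)/Q(u)` have order `m`. Coprimality and characteristic `0` give `∂v/∂u_m ≠ 0`
(`wronskian_ne_zero`). Hence `D^m u` is algebraic over `F(u, …, D^{m-1}u, v)`, and for `k ≥ 1` one
has `D^k v = (∂v/∂u_m) D^{m+k}u + t` with `t` involving only lower derivatives of `u`, so
`D^{m+k}u` is algebraic over `F(u, …, D^{m+k-1}u, D^k v)` for all `k` (`mem_cl_of_ord`).

Applying this to `v` over `u` and to `w` over `v`, an induction shows that in the sequence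
`z = (u, …, D^{m₁-1}u, v, …, D^{m₂-1}v, w, Dw, …)` the first `n` terms generate, up to algebraic
extension, the first `n` derivatives of `u` (`mem_cl_splice`). These are algebraically
independent, so by counting ranks in the matroid of algebraic independence `z` is algebraically
independent too (`algebraicIndependent_of_cl`), and `F⟨u⟩` is algebraic over `F(z)`. Independence
of `z` over `F` says that its first `m₁ + m₂` terms are independent over `F⟨w⟩`.
-/

open MvPolynomial

noncomputable section

namespace DiffCurve

variable (F : Type*) {E : Type*} [Field F] [Field E] [Algebra F E]

/-- `F⟨S⟩`: the intermediate field of `E/F` generated by all iterated derivatives of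
elements of `S`. -/
def genDF (D : Derivation ℤ E E) (S : Set E) : IntermediateField F E :=
  IntermediateField.adjoin F {x | ∃ s ∈ S, ∃ k : ℕ, (⇑D)^[k] s = x}

/-- `u` is differentially transcendental over `F`. -/
def DiffTrans (D : Derivation ℤ E E) (u : E) : Prop :=
  AlgebraicIndependent F (fun k : ℕ => (⇑D)^[k] u)

/-- Evaluation of `P ∈ F{u}` at `v`: the `F`-algebra map sending `u_k ↦ D^k v`. -/
def evalD (D : Derivation ℤ E E) (v : E) : MvPolynomial ℕ F →ₐ[F] E :=
  aeval fun k => (⇑D)^[k] v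

/-- Evaluation of `A ∈ F{x,y}` at `(η₁, η₂)`: `x_k ↦ D^k η₁`, `y_k ↦ D^k η₂`. -/
def evalD2 (D : Derivation ℤ E E) (η₁ η₂ : E) : MvPolynomial (Fin 2 × ℕ) F →ₐ[F] E :=
  aeval fun p => (⇑D)^[p.2] (if p.1 = 0 then η₁ else η₂)

variable {F}

/-- The order of `P ∈ F{u}`: the largest `k` such that `u_k` occurs (`⊥` if none). -/
def ordU (P : MvPolynomial ℕ F) : WithBot ℕ := P.vars.max

/-- `ord_x` (for `i = 0`) resp. `ord_y` (for `i = 1`) of `A ∈ F{x,y}`. -/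
def ordIdx (i : Fin 2) (A : MvPolynomial (Fin 2 × ℕ) F) : WithBot ℕ :=
  ((A.vars.filter fun v => v.1 = i).image Prod.snd).max

/-- `ord(A) = max(ord_x A, ord_y A)`. -/
def ordXY (A : MvPolynomial (Fin 2 × ℕ) F) : WithBot ℕ :=
  max (ordIdx 0 A) (ordIdx 1 A)

/-- The separant of `A` w.r.t. `x`: `∂A/∂x_s` where `s = ord_x A` (junk value `1` if
`ord_x A = ⊥`). -/
def sepX (A : MvPolynomial (Fin 2 × ℕ) F) : MvPolynomial (Fin 2 × ℕ) F :=
  WithBot.recBotCoe 1 (fun s => pderiv ((0 : Fin 2), s) A) (ordIdx 0 A)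

/-- The differential ideal `[A]` generated by `A`, for a derivation `d`. -/
def diffIdeal {R : Type*} [CommRing R] (d : Derivation ℤ R R) (A : R) : Ideal R :=
  Ideal.span (Set.range fun k : ℕ => (⇑d)^[k] A)

/-- The general component `sat(A) = [A] : S_A^∞` (as a set). -/
def satSet (dxy : Derivation ℤ (MvPolynomial (Fin 2 × ℕ) F) (MvPolynomial (Fin 2 × ℕ) F))
    (A : MvPolynomial (Fin 2 × ℕ) F) : Set (MvPolynomial (Fin 2 × ℕ) F) :=
  {f | ∃ m : ℕ, sepX A ^ m * f ∈ diffIdeal dxy A}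

variable (F)

/-- `(u, P₁, Q₁, P₂, Q₂)` is a differential rational parametrization of the differential
curve `(C, A)`. -/
def IsParam (D : Derivation ℤ E E)
    (dxy : Derivation ℤ (MvPolynomial (Fin 2 × ℕ) F) (MvPolynomial (Fin 2 × ℕ) F))
    (A : MvPolynomial (Fin 2 × ℕ) F) (u : E) (P₁ Q₁ P₂ Q₂ : MvPolynomial ℕ F) : Prop :=
  DiffTrans F D u ∧
  P₁ ≠ 0 ∧ Q₁ ≠ 0 ∧ IsRelPrime P₁ Q₁ ∧ P₂ ≠ 0 ∧ Q₂ ≠ 0 ∧ IsRelPrime P₂ Q₂ ∧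
  ¬ (evalD F D u P₁ / evalD F D u Q₁ ∈ (algebraMap F E).range ∧
     evalD F D u P₂ / evalD F D u Q₂ ∈ (algebraMap F E).range) ∧
  {B : MvPolynomial (Fin 2 × ℕ) F |
      evalD2 F D (evalD F D u P₁ / evalD F D u Q₁) (evalD F D u P₂ / evalD F D u Q₂) B = 0}
    = satSet dxy A

/-- A proper differential rational parametrization: additionally
`F⟨η₁, η₂⟩ = F⟨u⟩`. -/
def IsProperParam (D : Derivation ℤ E E)
    (dxy : Derivation ℤ (MvPolynomial (Fin 2 × ℕ) F) (MvPolynomial (Fin 2 × ℕ) F))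
    (A : MvPolynomial (Fin 2 × ℕ) F) (u : E) (P₁ Q₁ P₂ Q₂ : MvPolynomial ℕ F) : Prop :=
  IsParam F D dxy A u P₁ Q₁ P₂ Q₂ ∧
  genDF F D {evalD F D u P₁ / evalD F D u Q₁, evalD F D u P₂ / evalD F D u Q₂}
    = genDF F D {u}

/-- The projection `F{x,y,u} → F{x,y}` sending `u_k ↦ 0` and keeping `x_k`, `y_k`. -/
def projXY : MvPolynomial (Fin 3 × ℕ) F →ₐ[F] MvPolynomial (Fin 2 × ℕ) F :=
  aeval fun p => if h : (p.1 : ℕ) < 2 then X ((⟨p.1, h⟩ : Fin 2), p.2) else 0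

/-- The `i`-th row polynomial of the differential resultant matrix:
`d^{m₂}f₁, …, f₁, d^{m₁}f₂, …, f₂` where `f₁ = x₀·Q₁ − P₁`, `f₂ = y₀·Q₂ − P₂`
in `F{x,y,u}`. -/
def resRow (dxyu : Derivation ℤ (MvPolynomial (Fin 3 × ℕ) F) (MvPolynomial (Fin 3 × ℕ) F))
    (P₁ Q₁ P₂ Q₂ : MvPolynomial ℕ F) (m₁ m₂ : ℕ) (i : ℕ) : MvPolynomial (Fin 3 × ℕ) F :=
  if i ≤ m₂ then
    (⇑dxyu)^[m₂ - i] (X ((0 : Fin 3), 0) * rename (fun k => ((2 : Fin 3), k)) Q₁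
      - rename (fun k => ((2 : Fin 3), k)) P₁)
  else
    (⇑dxyu)^[m₁ + m₂ + 1 - i] (X ((1 : Fin 3), 0) * rename (fun k => ((2 : Fin 3), k)) Q₂
      - rename (fun k => ((2 : Fin 3), k)) P₂)

/-- The differential resultant `δ-Res(f₁, f₂) ∈ F{x,y}`: the determinant of the
`(m₁+m₂+2) × (m₁+m₂+2)` matrix whose rows are the coefficient vectors of
`d^{m₂}f₁, …, f₁, d^{m₁}f₂, …, f₂` w.r.t. `u_{m₁+m₂}, …, u_1, u_0, 1`. -/
def deltaRes (dxyu : Derivation ℤ (MvPolynomial (Fin 3 × ℕ) F) (MvPolynomial (Fin 3 × ℕ) F))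
    (P₁ Q₁ P₂ Q₂ : MvPolynomial ℕ F) (m₁ m₂ : ℕ) : MvPolynomial (Fin 2 × ℕ) F :=
  Matrix.det (Matrix.of fun i j : Fin (m₁ + m₂ + 2) =>
    if (j : ℕ) ≤ m₁ + m₂ then
      projXY F (pderiv ((2 : Fin 3), m₁ + m₂ - (j : ℕ)) (resRow F dxyu P₁ Q₁ P₂ Q₂ m₁ m₂ i))
    else projXY F (resRow F dxyu P₁ Q₁ P₂ Q₂ m₁ m₂ i))

/-- A linear homogeneous differential polynomial `L = Σ_k a_k u_k` in `F{u}`. -/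
def IsLinHom {F : Type*} [Field F] (L : MvPolynomial ℕ F) : Prop :=
  ∀ m ∈ L.support, ∃ k : ℕ, m = Finsupp.single k 1


/-! ### The Jacobian `∂P/∂u_m · Q - P · ∂Q/∂u_m` -/

section Helpers

variable {F E : Type*} [Field F] [Field E] [Algebra F E]

lemma coeff_pderiv' (i : ℕ) (f : MvPolynomial ℕ F) (s : ℕ →₀ ℕ) :
    coeff s (pderiv i f) = coeff (s + Finsupp.single i 1) f * ((s i : F) + 1) := by
  classical
  induction f using MvPolynomial.induction_on' with
  | add p q hp hq => simp only [map_add, coeff_add, hp, hq]; ring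
  | monomial t a =>
    rw [pderiv_monomial, coeff_monomial, coeff_monomial]
    by_cases h : t = s + Finsupp.single i 1
    · subst h; simp
    · rw [if_neg h, zero_mul]
      split_ifs with h2
      · have : t i = 0 := by
          by_contra h0
          apply h
          rw [← h2]
          refine (tsub_add_cancel_of_le ?_).symm
          simpa [Finsupp.single_le_iff] using Nat.one_le_iff_ne_zero.mpr h0
        simp [this]
      · rfl

lemma pderiv_ne_zero [CharZero F] {i : ℕ} {f : MvPolynomial ℕ F} (h : i ∈ f.vars) :
    pderiv i f ≠ 0 := by
  rw [mem_vars_iff_mem_support] at h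
  obtain ⟨t, ht, hi⟩ := h
  have hi' : 1 ≤ t i := Nat.one_le_iff_ne_zero.mpr (Finsupp.mem_support_iff.mp hi)
  intro h0
  have := coeff_pderiv' i f (t - Finsupp.single i 1)
  rw [h0, coeff_zero, tsub_add_cancel_of_le (by simpa [Finsupp.single_le_iff] using hi')] at this
  rcases mul_eq_zero.mp this.symm with h1 | h1
  · exact (mem_support_iff.mp ht) h1
  · exact Nat.cast_add_one_ne_zero _ h1

/-- Differentiation strictly lowers the total degree, so `f` divides its derivative only if
the latter is `0`. -/
lemma pderiv_eq_zero_of_dvd {i : ℕ} {f : MvPolynomial ℕ F} (h : f ∣ pderiv i f) :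
    pderiv i f = 0 := by
  by_contra h0
  have hd := totalDegree_le_of_dvd_of_isDomain h h0
  obtain ⟨s, hs, hs'⟩ := Finset.exists_mem_eq_sup (pderiv i f).support
    (support_nonempty.mpr h0) (fun s => s.sum fun _ e => e)
  have hc := mem_support_iff.mp hs
  rw [coeff_pderiv'] at hc
  have h3 := le_totalDegree (mem_support_iff.mpr (left_ne_zero_of_mul hc))
  rw [Finsupp.sum_add_index' (by simp) (by simp), Finsupp.sum_single_index rfl] at h3
  have : (pderiv i f).totalDegree = s.sum fun _ e => e := hs'
  omega

/-- If `u_m` occurs in one of the coprime polynomials `P`, `Q`, then `∂(P/Q)/∂u_m ≠ 0`. Otherwise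
each of `P`, `Q` divides its own derivative, which has smaller degree and hence vanishes; in
characteristic `0` neither polynomial then contains `u_m`. -/
lemma wronskian_ne_zero [CharZero F] {m : ℕ} {P Q : MvPolynomial ℕ F}
    (hPQ : IsRelPrime P Q) (hm : m ∈ P.vars ∨ m ∈ Q.vars) :
    pderiv m P * Q - P * pderiv m Q ≠ 0 := by
  intro h
  rw [sub_eq_zero] at h
  rcases hm with hm | hm
  · exact pderiv_ne_zero hm (pderiv_eq_zero_of_dvd
      (hPQ.dvd_of_dvd_mul_right (h ▸ dvd_mul_right _ _)))
  · exact pderiv_ne_zero hm (pderiv_eq_zero_of_dvd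
      (hPQ.symm.dvd_of_dvd_mul_left (h ▸ dvd_mul_left _ _)))

/-! ### The algebraic-dependence matroid -/

/-- The matroid of algebraic independence over `K` on `E`; the closure of `s` is the set of
elements of `E` algebraic over `K(s)`. -/
abbrev mat (K E : Type*) [Field K] [Field E] [Algebra K E] : Matroid E :=
  AlgebraicIndependent.matroid K E

lemma mem_cl_iff {s : Set E} {x : E} :
    x ∈ (mat F E).closure s ↔ IsAlgebraic (Algebra.adjoin F s) x := by
  rw [AlgebraicIndependent.matroid_closure_eq]; rfl

lemma mem_cl_iff' {s : Set E} {x : E} :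
    x ∈ (mat F E).closure s ↔ IsAlgebraic (IntermediateField.adjoin F s) x := by
  rw [mem_cl_iff, IntermediateField.isAlgebraic_adjoin_iff]

lemma adjoin_le_cl (s : Set E) : (IntermediateField.adjoin F s : Set E) ⊆ (mat F E).closure s :=
  fun x hx => mem_cl_iff'.mpr
    (isAlgebraic_algebraMap (⟨x, hx⟩ : IntermediateField.adjoin F s))

lemma cl_le_cl (K : IntermediateField F E) (s : Set E) :
    (mat F E).closure s ⊆ (mat K E).closure s := by
  intro x hx
  rw [mem_cl_iff] at *
  exact hx.tower_top_of_subalgebra_le (B := (Algebra.adjoin K s).restrictScalars F)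
    (Algebra.adjoin_le (Algebra.subset_adjoin (R := K)))

lemma encard_Iio (n : ℕ) : (Set.Iio n).encard = n := by
  rw [← Finset.coe_Iio, Set.encard_coe_eq_coe_finsetCard, Nat.card_Iio]

/-- If `u` is algebraically independent and every `u n` is algebraic over `z 0, …, z n`, then `z` is
algebraically independent: the closure of the first `n` terms of `z` has rank at least `n`. -/
lemma algebraicIndependent_of_cl {u z : ℕ → E} (hu : AlgebraicIndependent F u)
    (h : ∀ n, u n ∈ (mat F E).closure (z '' Set.Iic n)) : AlgebraicIndependent F z := by
  have key : ∀ n : ℕ, (mat F E).Indep (z '' Set.Iio n) ∧ (z '' Set.Iio n).encard = n := by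
    intro n
    have hfin : (z '' Set.Iio n).Finite := (Set.finite_Iio n).image z
    have h1 : u '' Set.Iio n ⊆ (mat F E).closure (z '' Set.Iio n) := by
      rintro _ ⟨k, hk, rfl⟩
      exact (mat F E).closure_subset_closure
        (Set.image_mono fun j (hj : j ≤ k) => lt_of_le_of_lt hj hk) (h k)
    have h2 : (mat F E).Indep (u '' Set.Iio n) :=
      Matroid.Indep.subset (AlgebraicIndependent.matroid_indep_iff.mpr hu.coe_range)
        (Set.image_subset_range _ _)
    have h3 : (n : ℕ∞) ≤ (mat F E).eRk (z '' Set.Iio n) := by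
      have := h2.encard_le_eRk_of_subset h1
      rw [Matroid.eRk_closure_eq, hu.injective.encard_image] at this
      rwa [encard_Iio] at this
    have h4 : (z '' Set.Iio n).encard ≤ n := by
      simpa only [encard_Iio] using Set.encard_image_le z (Set.Iio n)
    have h5 := (mat F E).eRk_le_encard (z '' Set.Iio n)
    have h6 : (z '' Set.Iio n).encard = n := le_antisymm h4 (h3.trans h5)
    exact ⟨(Matroid.indep_iff_eRk_eq_encard_of_finite hfin).mpr
      (le_antisymm h5 (h4.trans h3)), h6⟩
  have hinj : Function.Injective z := by
    intro a b hab
    have h1 : Set.InjOn z (Set.Iio (max a b + 1)) := by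
      refine (Set.finite_Iio _).injOn_of_encard_image_eq ?_
      rw [(key _).2, encard_Iio]
    exact h1 (by simp) (by simp) hab
  rw [← algebraicIndependent_subtype_range hinj]
  change (mat F E).Indep (Set.range z)
  refine Matroid.indep_of_forall_finite_subset_indep _ fun J hJ hfin => ?_
  rw [← Set.image_univ] at hJ
  obtain ⟨t, -, ht, rfl⟩ := (Set.exists_subset_image_finite_and (p := fun s => s = J)).mp
    ⟨J, hJ, hfin, rfl⟩
  obtain ⟨n, hn⟩ := ht.bddAbove
  exact (key (n + 1)).1.subset (Set.image_mono fun k hk => Nat.lt_succ_of_le (hn hk))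

/-- A family `x` in `S`, independent of `w` over `F`, is a transcendence basis of `K(S)` over
`K = F(w)` as soon as all of `S` is algebraic over `K(x)`. -/
lemma isTranscendenceBasis_adjoin {ι : Type*} (S : Set E) (w : ℕ → E) (x : ι → E)
    (hind : AlgebraicIndependent F (Sum.elim x w)) (K : IntermediateField F E)
    (hK : K = IntermediateField.adjoin F (Set.range w)) (hxS : ∀ i, x i ∈ S)
    (hS : S ⊆ (mat K E).closure (Set.range x)) :
    IsTranscendenceBasis K (fun i => (⟨x i, IntermediateField.subset_adjoin K S (hxS i)⟩ :
      IntermediateField.adjoin K S)) := by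
  have hx : AlgebraicIndependent K x := by
    subst hK
    exact IntermediateField.algebraicIndependent_adjoin_iff.mpr
      (AlgebraicIndependent.sumElim_iff.mp hind).2
  have hx' : AlgebraicIndependent K (fun i =>
      (⟨x i, IntermediateField.subset_adjoin K S (hxS i)⟩ : IntermediateField.adjoin K S)) :=
    AlgebraicIndependent.of_comp (IntermediateField.adjoin K S).val hx
  rw [hx'.isTranscendenceBasis_iff_isAlgebraic]
  refine ⟨fun a => ?_⟩
  by_contra ha
  have h1 := ((hx'.option_iff_transcendental a).mpr ha).map'
    (f := (IntermediateField.adjoin K S).val) Subtype.val_injective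
  have h2 : AlgebraicIndependent K (fun o : Option ι => o.elim (a : E) x) := by
    convert h1 using 1
    ext (_ | _) <;> rfl
  refine (hx.option_iff_transcendental _).mp h2 (mem_cl_iff.mp ?_)
  have h3 := adjoin_le_cl (F := K) S a.2
  exact (mat K E).closure_subset_closure_of_subset_closure hS h3

end Helpers

/-! ### Derivatives of a differential rational function -/

section Differential

variable {F E : Type*} [Field F] [Field E] [Algebra F E]

/-- The field `F(u, Du, …, D^{n-1}u)`. -/
def jet (F : Type*) {E : Type*} [Field F] [Field E] [Algebra F E] (D : Derivation ℤ E E)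
    (u : E) (n : ℕ) : IntermediateField F E :=
  IntermediateField.adjoin F ((fun k => (⇑D)^[k] u) '' Set.Iio n)

lemma jet_mono (D : Derivation ℤ E E) (u : E) {m n : ℕ} (h : m ≤ n) : jet F D u m ≤ jet F D u n :=
  IntermediateField.adjoin.mono _ _ _ (Set.image_mono fun _ hk => lt_of_lt_of_le hk h)

lemma iterate_mem_jet (D : Derivation ℤ E E) (u : E) {k n : ℕ} (h : k < n) :
    (⇑D)^[k] u ∈ jet F D u n :=
  IntermediateField.subset_adjoin _ _ ⟨k, h, rfl⟩

variable {δF : Derivation ℤ F F} {D : Derivation ℤ E E}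
  (hD : ∀ a : F, D (algebraMap F E a) = algebraMap F E (δF a))
include hD

lemma D_mem_of_adjoin {S : Set E} {L : IntermediateField F E} (hSL : S ⊆ L)
    (hDS : ∀ x ∈ S, D x ∈ L) {x : E} (hx : x ∈ IntermediateField.adjoin F S) : D x ∈ L := by
  have hle : IntermediateField.adjoin F S ≤ L := IntermediateField.adjoin_le_iff.mpr hSL
  induction hx using IntermediateField.adjoin_induction with
  | mem x hx => exact hDS x hx
  | algebraMap a => rw [hD]; exact algebraMap_mem _ _
  | add x y hx hy h1 h2 => rw [map_add]; exact add_mem h1 h2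
  | inv x hx h =>
    rw [Derivation.leibniz_inv, smul_eq_mul]
    exact mul_mem (neg_mem (pow_mem (inv_mem (hle hx)) 2)) h
  | mul x y hx hy h1 h2 =>
    rw [Derivation.leibniz, smul_eq_mul, smul_eq_mul]
    exact add_mem (mul_mem (hle hx) h2) (mul_mem (hle hy) h1)

lemma D_mem_jet {u : E} {n : ℕ} {x : E} (hx : x ∈ jet F D u n) : D x ∈ jet F D u (n + 1) := by
  refine D_mem_of_adjoin hD ?_ ?_ hx
  · rintro _ ⟨k, hk, rfl⟩
    exact iterate_mem_jet D u (Nat.lt_succ_of_lt hk)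
  · rintro _ ⟨k, hk, rfl⟩
    rw [← Function.iterate_succ_apply' (⇑D)]
    exact iterate_mem_jet D u (Nat.succ_lt_succ hk)

lemma iterate_mem_genDF {u v : E} (hv : v ∈ genDF F D {u}) (k : ℕ) :
    (⇑D)^[k] v ∈ genDF F D {u} := by
  induction k with
  | zero => exact hv
  | succ k ih =>
    rw [Function.iterate_succ_apply']
    refine D_mem_of_adjoin hD (IntermediateField.subset_adjoin _ _) ?_ ih
    rintro _ ⟨s, hs, k, rfl⟩
    rw [← Function.iterate_succ_apply' (⇑D)]
    exact IntermediateField.subset_adjoin _ _ ⟨s, hs, k + 1, rfl⟩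

omit hD in
lemma evalD_mem_jet (u : E) {n : ℕ} {P : MvPolynomial ℕ F}
    (hP : P ∈ supported F (Set.Iio n)) : evalD F D u P ∈ jet F D u n := by
  induction hP using Algebra.adjoin_induction with
  | mem x hx =>
    obtain ⟨i, hi, rfl⟩ := hx
    simpa [evalD] using iterate_mem_jet (F := F) D u hi
  | algebraMap a => rw [AlgHom.commutes]; exact algebraMap_mem _ _
  | add x y hx hy h1 h2 => rw [map_add]; exact add_mem h1 h2
  | mul x y hx hy h1 h2 => rw [map_mul]; exact mul_mem h1 h2

/-- The chain rule modulo `F(u, …, D^m u)`: for `P` of order at most `m`, the only term of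
`D(P(u))` involving `D^{m+1}u` is `(∂P/∂u_m)(u) · D^{m+1}u`. -/
lemma D_evalD (u : E) {m : ℕ} {P : MvPolynomial ℕ F} (hP : P ∈ supported F (Set.Iio (m + 1))) :
    ∃ t ∈ jet F D u (m + 1),
      D (evalD F D u P) = evalD F D u (pderiv m P) * (⇑D)^[m + 1] u + t := by
  induction hP using Algebra.adjoin_induction with
  | mem x hx =>
    obtain ⟨i, hi, rfl⟩ := hx
    rcases (Nat.lt_succ_iff_lt_or_eq.mp hi) with hi | rfl
    · refine ⟨(⇑D)^[i + 1] u, iterate_mem_jet D u (Nat.succ_lt_succ hi), ?_⟩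
      rw [pderiv_X_of_ne hi.ne]
      simp [evalD, Function.iterate_succ_apply']
    · refine ⟨0, zero_mem _, ?_⟩
      simp [evalD, Function.iterate_succ_apply']
  | algebraMap a =>
    refine ⟨algebraMap F E (δF a), algebraMap_mem _ _, ?_⟩
    rw [AlgHom.commutes, hD, MvPolynomial.algebraMap_eq, pderiv_C, map_zero, zero_mul, zero_add]
  | add x y hx hy h1 h2 =>
    obtain ⟨s, hs, h1⟩ := h1
    obtain ⟨t, ht, h2⟩ := h2
    refine ⟨s + t, add_mem hs ht, ?_⟩
    simp only [map_add, h1, h2]; ring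
  | mul x y hx hy h1 h2 =>
    obtain ⟨s, hs, h1⟩ := h1
    obtain ⟨t, ht, h2⟩ := h2
    refine ⟨evalD F D u x * t + evalD F D u y * s, add_mem (mul_mem (evalD_mem_jet u hx) ht)
      (mul_mem (evalD_mem_jet u hy) hs), ?_⟩
    rw [map_mul, Derivation.leibniz, Derivation.leibniz, h1, h2]
    simp only [map_add, map_mul, smul_eq_mul]; ring

omit hD in
/-- `P(u)`, for `P` of order at most `m`, as a univariate polynomial in `D^m u` over a field `M`
containing the lower derivatives; its formal derivative represents `∂P/∂u_m`. -/
lemma exists_poly (u : E) {m : ℕ} {P : MvPolynomial ℕ F}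
    (hP : P ∈ supported F (Set.Iio (m + 1))) (M : IntermediateField F E) (hM : jet F D u m ≤ M) :
    ∃ p : Polynomial M, Polynomial.aeval ((⇑D)^[m] u) p = evalD F D u P ∧
      Polynomial.aeval ((⇑D)^[m] u) (Polynomial.derivative p) = evalD F D u (pderiv m P) := by
  induction hP using Algebra.adjoin_induction with
  | mem x hx =>
    obtain ⟨i, hi, rfl⟩ := hx
    rcases (Nat.lt_succ_iff_lt_or_eq.mp hi) with hi | rfl
    · refine ⟨Polynomial.C ⟨(⇑D)^[i] u, hM (iterate_mem_jet D u hi)⟩, ?_, ?_⟩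
      · simp [evalD]
      · rw [pderiv_X_of_ne hi.ne]; simp
    · exact ⟨Polynomial.X, by simp [evalD], by simp [evalD]⟩
  | algebraMap a =>
    refine ⟨Polynomial.C (algebraMap F M a), ?_, ?_⟩
    · rw [AlgHom.commutes, Polynomial.aeval_C]; rfl
    · simp [MvPolynomial.algebraMap_eq]
  | add x y hx hy h1 h2 =>
    obtain ⟨p, hp, hp'⟩ := h1
    obtain ⟨q, hq, hq'⟩ := h2
    exact ⟨p + q, by simp [hp, hq], by simp [hp', hq']⟩
  | mul x y hx hy h1 h2 =>
    obtain ⟨p, hp, hp'⟩ := h1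
    obtain ⟨q, hq, hq'⟩ := h2
    refine ⟨p * q, by simp [hp, hq], ?_⟩
    simp only [Polynomial.derivative_mul, Derivation.leibniz, map_add, map_mul, hp, hq, hp', hq',
      smul_eq_mul]
    ring

omit hD in
lemma evalD_ne_zero {u : E} (hu : DiffTrans F D u) {P : MvPolynomial ℕ F} (hP : P ≠ 0) :
    evalD F D u P ≠ 0 :=
  fun h => hP ((injective_iff_map_eq_zero (evalD F D u)).mp hu P h)

omit hD in
lemma supported_of_ord {m : ℕ} {P : MvPolynomial ℕ F} (h : ordU P ≤ (m : WithBot ℕ)) :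
    P ∈ supported F (Set.Iio (m + 1)) := by
  rw [mem_supported]
  intro i hi
  have := (Finset.le_max hi).trans h
  exact Nat.lt_succ_of_le (WithBot.coe_le_coe.mp this)

omit hD in
lemma pderiv_mem_supported {s : Set ℕ} {m : ℕ} {P : MvPolynomial ℕ F} (hP : P ∈ supported F s) :
    pderiv m P ∈ supported F s := by
  classical
  induction hP using Algebra.adjoin_induction with
  | mem x hx =>
    obtain ⟨i, hi, rfl⟩ := hx
    rw [pderiv_X, Pi.single_apply]
    split_ifs
    exacts [one_mem _, zero_mem _]
  | algebraMap a => rw [MvPolynomial.algebraMap_eq, pderiv_C]; exact zero_mem _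
  | add x y hx hy h1 h2 => rw [map_add]; exact add_mem h1 h2
  | mul x y hx hy h1 h2 =>
    rw [Derivation.leibniz]
    exact add_mem (mul_mem hx h2) (mul_mem hy h1)

/-- For `v = P(u)/Q(u)` of order `m`, the derivative `D^{m+k}u` is algebraic over
`F(u, …, D^{m+k-1}u, D^k v)`. -/
lemma mem_cl_of_ord [CharZero F] {u : E} (hu : DiffTrans F D u) {P Q : MvPolynomial ℕ F}
    (hQ : Q ≠ 0) (hPQ : IsRelPrime P Q) {m : ℕ}
    (hm : max (ordU P) (ordU Q) = (m : WithBot ℕ)) (k : ℕ) :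
    (⇑D)^[m + k] u ∈ (mat F E).closure ((fun j => (⇑D)^[j] u) '' Set.Iio (m + k) ∪
      {(⇑D)^[k] (evalD F D u P / evalD F D u Q)}) := by
  have hPs := supported_of_ord (hm ▸ le_max_left _ _ : ordU P ≤ (m : WithBot ℕ))
  have hQs := supported_of_ord (hm ▸ le_max_right _ _ : ordU Q ≤ (m : WithBot ℕ))
  have hmem : m ∈ P.vars ∨ m ∈ Q.vars := by
    rcases max_choice (ordU P) (ordU Q) with h | h
    · exact Or.inl (Finset.mem_of_max (h.symm.trans hm))
    · exact Or.inr (Finset.mem_of_max (h.symm.trans hm))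
  have hW := evalD_ne_zero hu (wronskian_ne_zero hPQ hmem)
  rw [map_sub, map_mul, map_mul] at hW
  have hQ0 := evalD_ne_zero hu hQ
  have hPj := evalD_mem_jet (D := D) u hPs
  have hQj := evalD_mem_jet (D := D) u hQs
  set p := evalD F D u P with hp
  set q := evalD F D u Q with hq
  set p' := evalD F D u (pderiv m P) with hp'
  set q' := evalD F D u (pderiv m Q) with hq'
  rcases Nat.eq_zero_or_pos k with rfl | hk
  · rw [mem_cl_iff']
    set M := IntermediateField.adjoin F ((fun j => (⇑D)^[j] u) '' Set.Iio (m + 0) ∪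
      {(⇑D)^[0] (p / q)}) with hM
    have hjM : jet F D u m ≤ M := IntermediateField.adjoin.mono _ _ _ Set.subset_union_left
    have hvM : p / q ∈ M := IntermediateField.subset_adjoin _ _ (Or.inr rfl)
    obtain ⟨a, ha, ha'⟩ := exists_poly u hPs M hjM
    obtain ⟨b, hb, hb'⟩ := exists_poly u hQs M hjM
    -- If this polynomial were zero, so would its derivative be, against `∂(P/Q)/∂u_m ≠ 0`.
    refine ⟨a - Polynomial.C ⟨p / q, hvM⟩ * b, fun h0 => hW ?_, ?_⟩
    · have h1 := congrArg (fun f => Polynomial.aeval ((⇑D)^[m] u) (Polynomial.derivative f)) h0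
      simp only [map_sub, Polynomial.derivative_C_mul, map_mul,
        Polynomial.aeval_C, ha', hb', map_zero] at h1
      change p' - p / q * q' = 0 at h1
      field_simp at h1
      linear_combination h1
    · simp only [map_sub, map_mul, Polynomial.aeval_C, add_zero, ha, hb]
      change p - p / q * q = 0
      field_simp
      simp
  · have hpdj : p' ∈ jet F D u (m + 1) := evalD_mem_jet u (pderiv_mem_supported hPs)
    have hqdj : q' ∈ jet F D u (m + 1) := evalD_mem_jet u (pderiv_mem_supported hQs)
    have hS : q⁻¹ ^ 2 * (p' * q - p * q') ∈ jet F D u (m + 1) :=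
      mul_mem (pow_mem (inv_mem hQj) 2) (sub_mem (mul_mem hpdj hQj) (mul_mem hPj hqdj))
    -- `D^k v` is affine in `D^{m+k}u`, with leading coefficient `∂v/∂u_m` for every `k ≥ 1`.
    have hrep : ∃ t ∈ jet F D u (m + k), (⇑D)^[k] (p / q) =
        q⁻¹ ^ 2 * (p' * q - p * q') * (⇑D)^[m + k] u + t := by
      induction k, hk using Nat.le_induction with
      | base =>
        obtain ⟨s, hs, h1⟩ := D_evalD hD u hPs
        obtain ⟨t, ht, h2⟩ := D_evalD hD u hQs
        refine ⟨q⁻¹ ^ 2 * (q * s - p * t), mul_mem (pow_mem (inv_mem hQj) 2)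
          (sub_mem (mul_mem hQj hs) (mul_mem hPj ht)), ?_⟩
        change D (p / q) = _
        rw [Derivation.leibniz_div, h1, h2]
        simp only [smul_eq_mul]; ring
      | succ k hk ih =>
        obtain ⟨t, ht, h⟩ := ih
        have hSk := D_mem_jet hD (jet_mono D u (by omega : m + 1 ≤ m + k) hS)
        refine ⟨(⇑D)^[m + k] u * D (q⁻¹ ^ 2 * (p' * q - p * q')) + D t,
          add_mem (mul_mem (iterate_mem_jet D u (by omega)) hSk) (D_mem_jet hD ht), ?_⟩
        rw [Function.iterate_succ_apply', h, map_add, Derivation.leibniz, ← add_assoc m k 1,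
          Function.iterate_succ_apply']
        simp only [smul_eq_mul]; ring
    obtain ⟨t, ht, h⟩ := hrep
    apply adjoin_le_cl
    set M := IntermediateField.adjoin F ((fun j => (⇑D)^[j] u) '' Set.Iio (m + k) ∪
      {(⇑D)^[k] (p / q)}) with hM
    have hjM : jet F D u (m + k) ≤ M := IntermediateField.adjoin.mono _ _ _ Set.subset_union_left
    have hvM : (⇑D)^[k] (p / q) ∈ M := IntermediateField.subset_adjoin _ _ (Or.inr rfl)
    have hS0 : q⁻¹ ^ 2 * (p' * q - p * q') ≠ 0 := mul_ne_zero (pow_ne_zero _ (inv_ne_zero hQ0)) hW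
    have hu' : (⇑D)^[m + k] u =
        ((⇑D)^[k] (p / q) - t) / (q⁻¹ ^ 2 * (p' * q - p * q')) := by
      rw [eq_div_iff hS0, h]; ring
    have hSM := hjM (jet_mono D u (by omega : m + 1 ≤ m + k) hS)
    rw [SetLike.mem_coe, hu']
    exact div_mem (sub_mem hvM (hjM ht)) hSM

/-- The sequence `a 0, …, a (m-1), b 0, b 1, …`. -/
def splice (m : ℕ) (a b : ℕ → E) (n : ℕ) : E := if n < m then a n else b (n - m)

omit hD in
/-- If every `a (m + k)` is algebraic over `a 0, …, a (m+k-1), v k` and every `v n` is algebraic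
over `y 0, …, y n`, then every `a n` is algebraic over the first `n + 1` terms of
`a 0, …, a (m-1), y 0, y 1, …`. -/
lemma mem_cl_splice {m : ℕ} {a v y : ℕ → E}
    (ha : ∀ k, a (m + k) ∈ (mat F E).closure (a '' Set.Iio (m + k) ∪ {v k}))
    (hv : ∀ n, v n ∈ (mat F E).closure (y '' Set.Iic n)) (n : ℕ) :
    a n ∈ (mat F E).closure (splice m a y '' Set.Iic n) := by
  induction n using Nat.strong_induction_on with
  | _ n ih =>
    rcases lt_or_ge n m with h | h
    · exact (mat F E).mem_closure_of_mem ⟨n, le_refl n, if_pos h⟩ (Set.subset_univ _)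
    · obtain ⟨k, rfl⟩ := Nat.exists_eq_add_of_le h
      refine (mat F E).closure_subset_closure_of_subset_closure ?_ (ha k)
      rintro _ (⟨j, hj, rfl⟩ | rfl)
      · exact (mat F E).closure_subset_closure
          (Set.image_mono (Set.Iic_subset_Iic.mpr (le_of_lt hj))) (ih j hj)
      · refine (mat F E).closure_subset_closure ?_ (hv k)
        rintro _ ⟨j, hj, rfl⟩
        exact ⟨m + j, Nat.add_le_add_left hj m, by simp [splice]⟩

end Differential

/-- additivity of the order under composition of differential rational
functions: `v := P₁(u)/Q₁(u)` is differentially transcendental over `F` and the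
transcendence degree of `F⟨u⟩` over `F⟨P₂(v)/Q₂(v)⟩` is `m₁ + m₂`. -/
theorem order_additive_composition [CharZero F]
    (δF : Derivation ℤ F F) (D : Derivation ℤ E E)
    (hD : ∀ a : F, D (algebraMap F E a) = algebraMap F E (δF a))
    (u : E) (hu : DiffTrans F D u)
    (P₁ Q₁ : MvPolynomial ℕ F) (hP₁ : P₁ ≠ 0) (hQ₁ : Q₁ ≠ 0) (hPQ₁ : IsRelPrime P₁ Q₁)
    (m₁ : ℕ) (hm₁ : max (ordU P₁) (ordU Q₁) = (m₁ : WithBot ℕ)) :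
    DiffTrans F D (evalD F D u P₁ / evalD F D u Q₁) ∧
    ∀ (P₂ Q₂ : MvPolynomial ℕ F), P₂ ≠ 0 → Q₂ ≠ 0 → IsRelPrime P₂ Q₂ →
      ∀ m₂ : ℕ, max (ordU P₂) (ordU Q₂) = (m₂ : WithBot ℕ) →
      (let v := evalD F D u P₁ / evalD F D u Q₁;
       evalD F D v Q₂ ≠ 0 ∧
       ∃ x : Fin (m₁ + m₂) → ↥(IntermediateField.adjoin
           (↥(genDF F D {evalD F D v P₂ / evalD F D v Q₂}))
           ((genDF F D {u} : IntermediateField F E) : Set E)),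
         IsTranscendenceBasis (↥(genDF F D {evalD F D v P₂ / evalD F D v Q₂})) x) := by
  have iter (v : E) : ∀ n, (⇑D)^[n] v ∈ (mat F E).closure ((fun j => (⇑D)^[j] v) '' Set.Iic n) :=
    fun n => (mat F E).mem_closure_of_mem ⟨n, le_refl n, rfl⟩ (Set.subset_univ _)
  have h1 := mem_cl_of_ord hD hu hQ₁ hPQ₁ hm₁
  -- The sequence `u, …, D^{m₁-1}u, v, Dv, …` is algebraically independent.
  have hv : DiffTrans F D (evalD F D u P₁ / evalD F D u Q₁) := by
    have := (algebraicIndependent_of_cl hu (mem_cl_splice h1 (iter _))).comp (m₁ + ·)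
      (add_right_injective m₁)
    simp only [Function.comp_def, splice, add_lt_iff_neg_left, not_lt_zero, if_false,
      add_tsub_cancel_left] at this
    exact this
  refine ⟨hv, fun P₂ Q₂ hP₂ hQ₂ hPQ₂ m₂ hm₂ => ?_⟩
  intro v
  refine ⟨evalD_ne_zero hv hQ₂, ?_⟩
  have h2 := mem_cl_of_ord hD hv hQ₂ hPQ₂ hm₂
  set w := evalD F D v P₂ / evalD F D v Q₂ with hw
  have h3 := mem_cl_splice h1 (mem_cl_splice h2 (iter w))
  -- `z` is the sequence `u, …, D^{m₁-1}u, v, …, D^{m₂-1}v, w, Dw, …`.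
  set z : ℕ → E := splice m₁ (fun j => (⇑D)^[j] u) (splice m₂ (fun j => (⇑D)^[j] v)
    (fun j => (⇑D)^[j] w)) with hz
  have hzw (k : ℕ) : z (m₁ + m₂ + k) = (⇑D)^[k] w := by simp [hz, splice, add_assoc]
  have hind : AlgebraicIndependent F
      (Sum.elim (fun i : Fin (m₁ + m₂) => z i) (fun j => (⇑D)^[j] w)) := by
    have := (algebraicIndependent_of_cl hu h3).comp
      (Sum.elim (fun i : Fin (m₁ + m₂) => (i : ℕ)) (fun k => m₁ + m₂ + k)) (by
        rintro (i | i) (j | j) hij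
        · exact congrArg _ (Fin.ext hij)
        · have := i.2; simp at hij; omega
        · have := j.2; simp at hij; omega
        · simpa using hij)
    convert this using 1
    ext (i | k)
    · rfl
    · exact (hzw k).symm
  have huu : u ∈ genDF F D {u} := IntermediateField.subset_adjoin _ _ ⟨u, rfl, 0, rfl⟩
  have hvu : v ∈ genDF F D {u} := by
    have hmem (P : MvPolynomial ℕ F) : evalD F D u P ∈ genDF F D {u} := by
      have hle : jet F D u (P.vars.sup id + 1) ≤ genDF F D {u} :=
        IntermediateField.adjoin.mono _ _ _ (by rintro _ ⟨k, -, rfl⟩; exact ⟨u, rfl, k, rfl⟩)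
      exact hle (evalD_mem_jet u (mem_supported.mpr fun i hi =>
        Nat.lt_succ_of_le (Finset.le_sup (f := id) hi)))
    exact div_mem (hmem P₁) (hmem Q₁)
  refine ⟨_, isTranscendenceBasis_adjoin (genDF F D {u} : Set E) (fun j => (⇑D)^[j] w) (fun i : Fin (m₁ + m₂) => z i)
    hind (genDF F D {w}) ?_ ?_ ?_⟩
  · unfold genDF
    congr 1
    ext x
    simp
  · intro i
    rcases lt_or_ge (i : ℕ) m₁ with h | h
    · simp only [hz, splice, if_pos h]
      exact iterate_mem_genDF hD huu _
    · have h' : (i : ℕ) - m₁ < m₂ := by omega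
      simp only [hz, splice, if_neg h.not_gt, if_pos h']
      exact iterate_mem_genDF hD hvu _
  · have hrange : Set.range z ⊆
        (mat (genDF F D {w}) E).closure (Set.range fun i : Fin (m₁ + m₂) => z i) := by
      rintro _ ⟨n, rfl⟩
      rcases lt_or_ge n (m₁ + m₂) with h | h
      · exact Matroid.mem_closure_of_mem _ ⟨⟨n, h⟩, rfl⟩ (Set.subset_univ _)
      · obtain ⟨k, rfl⟩ := Nat.exists_eq_add_of_le h
        have hwk : (⇑D)^[k] w ∈ genDF F D {w} :=
          IntermediateField.subset_adjoin _ _ ⟨w, rfl, k, rfl⟩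
        rw [hzw]
        exact adjoin_le_cl _ (algebraMap_mem (IntermediateField.adjoin (genDF F D {w})
          (Set.range fun i : Fin (m₁ + m₂) => z i)) ⟨_, hwk⟩)
    have hu_cl : {x | ∃ s ∈ ({u} : Set E), ∃ k : ℕ, (⇑D)^[k] s = x} ⊆
        (mat F E).closure (Set.range z) := by
      rintro _ ⟨_, rfl, k, rfl⟩
      exact (mat F E).closure_subset_closure (Set.image_subset_range _ _) (h3 k)
    exact (adjoin_le_cl _).trans <|
      ((mat F E).closure_subset_closure_of_subset_closure hu_cl).trans <|
      (cl_le_cl _ _).trans (Matroid.closure_subset_closure_of_subset_closure hrange)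

end DiffCurve
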